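/- arXiv:1901.11500 — 6 statements merged into one kernel-verified Lean document; each statement's English description precedes it below -/
import Mathlib

section
/- Let g : E → ℝ be λ-strongly convex (λ > 0) and L-smooth, i.e. g(y) ≥ g(x) + ⟪∇g(x), y − x⟫ + (λ/2)‖y − x‖² and g(y) ≤ g(x) + ⟪∇g(x), y − x⟫ + (L/2)‖y − x‖² for all x,y, and let x* ∈ K be the minimizer of g over K. Then for any step size 0 < η ≤ 1/L and any v ∈ K, the projected gradient step satisfies ‖Π(v − η ∇g(v)) − x*‖ ≤ √(1 − 2λη/(1 + ηλ)) · ‖v − x*‖. -/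
open RealInnerProductSpace

lemma nonneg_of_quadratic {a b : ℝ}
    (h : ∀ t : ℝ, 0 < t → t ≤ 1 → 0 ≤ t * a + t ^ 2 * b) : 0 ≤ a := by
  by_contra ha
  have ha : a < 0 := not_le.mp ha
  have hb : 0 < |b| - a := by have := abs_nonneg b; linarith
  have ht : 0 < -a / (|b| - a) / 2 := by
    have : 0 < -a := by linarith
    positivity
  have h1 : -a / (|b| - a) ≤ 1 := by
    rw [div_le_one hb]; have := abs_nonneg b; linarith
  have h2 := h _ ht (by linarith)
  set t := -a / (|b| - a) / 2 with htd
  have h3 : t * (|b| - a) = -a / 2 := by rw [htd]; field_simp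
  have h4 : 0 ≤ t * (a + t * b) := by nlinarith
  have h5 : 0 ≤ a + t * b := nonneg_of_mul_nonneg_right h4 ht
  have h6 : t * b ≤ t * |b| := mul_le_mul_of_nonneg_left (le_abs_self b) ht.le
  nlinarith

/-- contraction of the projected gradient step for a `λ`-strongly convex,
`L`-smooth function (Lemma 1 / Lemma `GradCont`). -/
theorem projected_gradient_step_contraction
    {E : Type*} [NormedAddCommGroup E] [InnerProductSpace ℝ E] [CompleteSpace E]
    (K : Set E) (hKne : K.Nonempty) (hKcl : IsClosed K) (hKconv : Convex ℝ K)
    (proj : E → E) (hprojMem : ∀ u, proj u ∈ K)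
    (hproj : ∀ u, ∀ y ∈ K, ‖u - proj u‖ ≤ ‖u - y‖)
    (g : E → ℝ) (gradg : E → E)
    (hgrad : ∀ x, HasGradientAt g (gradg x) x)
    (lam L : ℝ) (hlam : 0 < lam)
    (hStrong : ∀ x y : E, g y ≥ g x + ⟪gradg x, y - x⟫ + lam / 2 * ‖y - x‖ ^ 2)
    (hSmooth : ∀ x y : E, g y ≤ g x + ⟪gradg x, y - x⟫ + L / 2 * ‖y - x‖ ^ 2)
    (xstar : E) (hxstarMem : xstar ∈ K) (hxstarMin : ∀ y ∈ K, g xstar ≤ g y)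
    (η : ℝ) (hη : 0 < η) (hηL : η ≤ 1 / L)
    (v : E) (hv : v ∈ K) :
    ‖proj (v - η • gradg v) - xstar‖ ≤
      Real.sqrt (1 - 2 * lam * η / (1 + η * lam)) * ‖v - xstar‖ := by
  have hL : 0 < L := by
    have : 0 < 1 / L := lt_of_lt_of_le hη hηL
    exact one_div_pos.mp this
  have hηL' : η * L ≤ 1 := (le_div_iff₀ hL).mp hηL
  obtain ⟨p, hp⟩ : ∃ p, p = proj (v - η • gradg v) := ⟨_, rfl⟩
  have hpK : p ∈ K := hp ▸ hprojMem _
  have hpm := hproj (v - η • gradg v)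
  rw [← hp] at hpm ⊢
  have seg : ∀ x ∈ K, ∀ y ∈ K, ∀ t : ℝ, 0 < t → t ≤ 1 → x + t • (y - x) ∈ K := by
    intro x hx y hy t h0 h1
    exact hKconv.add_smul_sub_mem hx hy ⟨h0.le, h1⟩
  have opt : 0 ≤ ⟪gradg xstar, p - xstar⟫ := by
    apply nonneg_of_quadratic (b := L / 2 * ‖p - xstar‖ ^ 2)
    intro t h0 h1
    have hz := seg _ hxstarMem _ hpK t h0 h1
    have e1 := hxstarMin _ hz
    have e2 := hSmooth xstar (xstar + t • (p - xstar))
    rw [add_sub_cancel_left, inner_smul_right, norm_smul, mul_pow, Real.norm_eq_abs,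
      sq_abs] at e2
    linarith
  have var : 0 ≤ -2 * ⟪v - η • gradg v - p, xstar - p⟫ := by
    apply nonneg_of_quadratic (b := ‖xstar - p‖ ^ 2)
    intro t h0 h1
    have hz := hpm _ (seg _ hpK _ hxstarMem t h0 h1)
    have e1 := pow_le_pow_left₀ (norm_nonneg _) hz 2
    rw [← sub_sub, norm_sub_sq_real (v - η • gradg v - p), inner_smul_right, norm_smul,
      mul_pow, Real.norm_eq_abs, sq_abs] at e1
    linarith
  have s1 := hStrong v xstar
  have s2 := hStrong xstar p
  have s3 := hSmooth v p
  have i1 : ⟪v - η • gradg v - p, xstar - p⟫ =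
      ⟪v - p, xstar - p⟫ - η * (⟪gradg v, xstar - v⟫ - ⟪gradg v, p - v⟫) := by
    simp only [inner_sub_left, inner_sub_right, real_inner_smul_left]; ring
  have i2 : ‖xstar - v‖ ^ 2 = ‖p - v‖ ^ 2 + ‖p - xstar‖ ^ 2 - 2 * ⟪v - p, xstar - p⟫ := by
    have : xstar - v = (xstar - p) - (v - p) := by abel
    rw [this, norm_sub_sq_real, real_inner_comm, norm_sub_rev xstar p, norm_sub_rev v p]
    ring
  rw [norm_sub_rev v xstar]
  have hs : 0 ≤ g p - g xstar - lam / 2 * ‖p - xstar‖ ^ 2 := by linarith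
  have hs' := mul_nonneg hη.le hs
  have ht : 0 ≤ -(⟪gradg v, xstar - v⟫ - ⟪gradg v, p - v⟫) + g xstar - g p
      - lam / 2 * ‖xstar - v‖ ^ 2 + L / 2 * ‖p - v‖ ^ 2 := by linarith
  have ht' := mul_nonneg hη.le ht
  have hu := mul_nonneg (sub_nonneg.mpr hηL') (sq_nonneg ‖p - v‖)
  have key : ‖p - xstar‖ ^ 2 * (1 + η * lam) ≤ (1 - η * lam) * ‖xstar - v‖ ^ 2 := by
    rw [i1] at var
    linarith
  have hpos : 0 < 1 + η * lam := by positivity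
  have hc : 1 - 2 * lam * η / (1 + η * lam) = (1 - η * lam) / (1 + η * lam) := by
    field_simp; ring
  have key2 : ‖p - xstar‖ ^ 2 ≤
      (1 - 2 * lam * η / (1 + η * lam)) * ‖xstar - v‖ ^ 2 := by
    rw [hc, div_mul_eq_mul_div, le_div_iff₀ hpos]; exact key
  have := Real.le_sqrt_of_sq_le key2
  rwa [Real.sqrt_mul' _ (sq_nonneg _), Real.sqrt_sq (norm_nonneg _)] at this
end

section
/- Under assumptions (A2)–(A4), let 0 < η ≤ 1/L, let θ, θ̂ ∈ Θ, let x* ∈ K be the minimizer of f(·,θ) over K, and let x ∈ K. Then the projected gradient step taken with the predicted parameter satisfies ‖Π(x − η ∇_x f(x, θ̂)) − x*‖ ≤ C_{η,λ} ‖x − x*‖ + η C_θ ‖θ − θ̂‖. -/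
open RealInnerProductSpace

/-- The contraction constant `C_{η,λ} = √(1 - 2λη/(1+ηλ))`. -/
noncomputable def contractionConst (η lam : ℝ) : ℝ :=
  Real.sqrt (1 - 2 * lam * η / (1 + η * lam))

/-- one projected gradient step with the predicted parameter is an approximate
contraction, with error controlled by the parameter prediction error. -/
theorem predicted_gradient_step_approx_contraction
    {E : Type*} [NormedAddCommGroup E] [InnerProductSpace ℝ E] [CompleteSpace E]
    {m : ℕ} (Θ : Set (EuclideanSpace ℝ (Fin m)))
    (K : Set E) (hKne : K.Nonempty) (hKcl : IsClosed K) (hKconv : Convex ℝ K)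
    (proj : E → E) (hprojMem : ∀ u, proj u ∈ K)
    (hproj : ∀ u, ∀ y ∈ K, ‖u - proj u‖ ≤ ‖u - y‖)
    (f : E → EuclideanSpace ℝ (Fin m) → ℝ)
    (gradf : E → EuclideanSpace ℝ (Fin m) → E)
    (hgrad : ∀ x θ, HasGradientAt (fun y => f y θ) (gradf x θ) x)
    (L lam Cθ : ℝ) (hlam : 0 < lam)
    -- (A2) L-smooth in x
    (hA2 : ∀ θ ∈ Θ, ∀ x y : E,
      f y θ ≤ f x θ + ⟪gradf x θ, y - x⟫ + L / 2 * ‖y - x‖ ^ 2)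
    -- (A3) λ-strongly convex in x
    (hA3 : ∀ θ ∈ Θ, ∀ x y : E,
      f y θ ≥ f x θ + ⟪gradf x θ, y - x⟫ + lam / 2 * ‖y - x‖ ^ 2)
    -- (A4) Lipschitz x-gradients in θ
    (hA4 : ∀ x ∈ K, ∀ θ₁ ∈ Θ, ∀ θ₂ ∈ Θ,
      ‖gradf x θ₁ - gradf x θ₂‖ ≤ Cθ * ‖θ₁ - θ₂‖)
    (η : ℝ) (hη : 0 < η) (hηL : η ≤ 1 / L)
    (θ θhat : EuclideanSpace ℝ (Fin m)) (hθ : θ ∈ Θ) (hθhat : θhat ∈ Θ)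
    (xstar : E) (hxstarMem : xstar ∈ K)
    (hxstarMin : ∀ y ∈ K, f xstar θ ≤ f y θ)
    (x : E) (hx : x ∈ K) :
    ‖proj (x - η • gradf x θhat) - xstar‖ ≤
      contractionConst η lam * ‖x - xstar‖ + η * Cθ * ‖θ - θhat‖ := by
  have hL : 0 < L := by
    have : 0 < 1 / L := lt_of_lt_of_le hη hηL
    exact one_div_pos.mp this
  have hηL1 : η * L ≤ 1 := (le_div_iff₀ hL).mp hηL
  -- variational inequality for the projection
  have hVI : ∀ u, ∀ y ∈ K, ⟪u - proj u, y - proj u⟫ ≤ 0 := by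
    intro u
    refine (norm_eq_iInf_iff_real_inner_le_zero hKconv (hprojMem u)).mp ?_
    have : Nonempty K := hKne.to_subtype
    apply le_antisymm
    · exact le_ciInf fun w => hproj u w w.2
    · exact ciInf_le (f := fun w : K => ‖u - w‖)
        ⟨0, by rintro _ ⟨w, rfl⟩; exact norm_nonneg _⟩ ⟨proj u, hprojMem u⟩
  have hnonexp : ∀ u v, ‖proj u - proj v‖ ≤ ‖u - v‖ := by
    intro u v
    have h1 := hVI u (proj v) (hprojMem v)
    have h2 := hVI v (proj u) (hprojMem u)
    have h3 : ‖proj u - proj v‖ ^ 2 ≤ ⟪u - v, proj u - proj v⟫ := by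
      rw [← real_inner_self_eq_norm_sq]
      simp only [inner_sub_left, inner_sub_right] at h1 h2 ⊢
      linarith
    have h4 := real_inner_le_norm (u - v) (proj u - proj v)
    by_contra hc
    push Not at hc
    nlinarith [norm_nonneg (u - v), norm_nonneg (proj u - proj v)]
  -- first-order optimality
  have hopt : ∀ y ∈ K, 0 ≤ ⟪gradf xstar θ, y - xstar⟫ := by
    intro y hy
    by_contra hc
    push Not at hc
    have key : ∀ t : ℝ, 0 < t → t ≤ 1 →
        0 ≤ ⟪gradf xstar θ, y - xstar⟫ + t * (L / 2 * ‖y - xstar‖ ^ 2) := by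
      intro t ht ht1
      have hz : xstar + t • (y - xstar) ∈ K :=
        hKconv.add_smul_sub_mem hxstarMem hy ⟨ht.le, ht1⟩
      have h1 := hxstarMin _ hz
      have h2 := hA2 θ hθ xstar (xstar + t • (y - xstar))
      rw [add_sub_cancel_left, inner_smul_right, norm_smul, mul_pow, Real.norm_eq_abs,
        sq_abs] at h2
      have h3 : 0 ≤ t * (⟪gradf xstar θ, y - xstar⟫ + t * (L / 2 * ‖y - xstar‖ ^ 2)) := by
        linarith
      exact nonneg_of_mul_nonneg_right h3 ht
    have hb : 0 ≤ L / 2 * ‖y - xstar‖ ^ 2 := by positivity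
    generalize L / 2 * ‖y - xstar‖ ^ 2 = b at key hb
    generalize ⟪gradf xstar θ, y - xstar⟫ = a at key hc
    have hba : 0 < b - a := by linarith
    have h := key (-a / (b - a)) (div_pos (by linarith) hba)
      ((div_le_one hba).mpr (by linarith))
    have he : a + -a / (b - a) * b = -(a ^ 2 / (b - a)) := by
      field_simp
      ring
    have : 0 < a ^ 2 / (b - a) := div_pos (by nlinarith) hba
    linarith
  have hmain : ‖proj (x - η • gradf x θ) - xstar‖ ≤
      contractionConst η lam * ‖x - xstar‖ := by
    have hv := hVI (x - η • gradf x θ) xstar hxstarMem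
    have hpK := hprojMem (x - η • gradf x θ)
    generalize proj (x - η • gradf x θ) = p at hv hpK
    have h1 := hA2 θ hθ x p
    have h2 := hA3 θ hθ x xstar
    have h3 := hA3 θ hθ xstar p
    have h4 := hopt p hpK
    have e1 : ⟪x - η • gradf x θ - p, xstar - p⟫ =
        (‖p - xstar‖ ^ 2 + ‖p - x‖ ^ 2 - ‖xstar - x‖ ^ 2) / 2
          + η * (⟪gradf x θ, p - x⟫ - ⟪gradf x θ, xstar - x⟫) := by
      simp only [← real_inner_self_eq_norm_sq, inner_sub_left, inner_sub_right,
        inner_smul_left, real_inner_comm p x, real_inner_comm p xstar, real_inner_comm xstar x]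
      simp
      ring
    rw [e1] at hv
    have h5 : lam / 2 * ‖p - xstar‖ ^ 2 + lam / 2 * ‖xstar - x‖ ^ 2 ≤
        ⟪gradf x θ, p - x⟫ - ⟪gradf x θ, xstar - x⟫ + L / 2 * ‖p - x‖ ^ 2 := by linarith
    have h6 := mul_le_mul_of_nonneg_left h5 hη.le
    have h7 : η * L * ‖p - x‖ ^ 2 ≤ 1 * ‖p - x‖ ^ 2 :=
      mul_le_mul_of_nonneg_right hηL1 (sq_nonneg _)
    have h8 : (1 + η * lam) * ‖p - xstar‖ ^ 2 ≤ (1 - η * lam) * ‖xstar - x‖ ^ 2 := by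
      linarith
    have hpos : 0 < 1 + η * lam := by positivity
    have hc : 1 - 2 * lam * η / (1 + η * lam) = (1 - η * lam) / (1 + η * lam) := by
      field_simp
      ring
    rw [norm_sub_rev xstar x] at h8
    unfold contractionConst
    rw [hc]
    nth_rewrite 1 [← Real.sqrt_sq (norm_nonneg (x - xstar))]
    rw [← Real.sqrt_mul' _ (sq_nonneg _)]
    apply Real.le_sqrt_of_sq_le
    rw [div_mul_eq_mul_div, le_div_iff₀ hpos]
    linarith
  have hne := hnonexp (x - η • gradf x θhat) (x - η • gradf x θ)
  have e : x - η • gradf x θhat - (x - η • gradf x θ) = η • (gradf x θ - gradf x θhat) := by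
    rw [smul_sub]; abel
  rw [e, norm_smul, Real.norm_of_nonneg hη.le] at hne
  have h4 := mul_le_mul_of_nonneg_left (hA4 x hx θ hθ θhat hθhat) hη.le
  have htri := norm_sub_le_norm_sub_add_norm_sub (proj (x - η • gradf x θhat))
    (proj (x - η • gradf x θ)) xstar
  linarith
end

section
/- Under assumptions (A2)–(A4), let 0 < η ≤ 1/L, let θ, θ̂ ∈ Θ, let x* ∈ K be the minimizer of f(·,θ) over K, let x ∈ K, and define the k-step predicted projected gradient iterates by z⁰ = x and z^{j+1} = Π(z^j − η ∇_x f(z^j, θ̂)) for j ≥ 0. Then for every integer k ≥ 1, ‖z^k − x*‖ ≤ C_{η,λ}^k ‖x − x*‖ + (η C_θ (1 − C_{η,λ}^k)/(1 − C_{η,λ})) ‖θ − θ̂‖; in particular ‖z^k − x*‖ ≤ C_{η,λ}^k ‖x − x*‖ + (η C_θ/(1 − C_{η,λ})) ‖θ − θ̂‖. -/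
open RealInnerProductSpace

lemma aux_scalar (a b : ℝ) (h : ∀ t : ℝ, 0 < t → t ≤ 1 → 0 ≤ t * a + t ^ 2 * b) : 0 ≤ a := by
  by_contra! ha
  have hb : 0 < |b| + 1 := by positivity
  have ht : 0 < min 1 (-a / (2 * (|b| + 1))) :=
    lt_min one_pos (div_pos (by linarith) (by positivity))
  have h1 := h _ ht (min_le_left _ _)
  have h2 := min_le_right 1 (-a / (2 * (|b| + 1)))
  generalize min 1 (-a / (2 * (|b| + 1))) = t at *
  rw [le_div_iff₀ (by positivity)] at h2
  have h3 : 0 ≤ a + t * b := by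
    by_contra! h4
    nlinarith
  nlinarith [le_abs_self b]

lemma aux_proj {E : Type*} [NormedAddCommGroup E] [InnerProductSpace ℝ E]
    (K : Set E) (hK : Convex ℝ K) (u p y : E) (hp : p ∈ K) (hy : y ∈ K)
    (h : ∀ y ∈ K, ‖u - p‖ ≤ ‖u - y‖) : ⟪u - p, y - p⟫ ≤ 0 := by
  have := aux_scalar (-(2 * ⟪u - p, y - p⟫)) (‖y - p‖ ^ 2) (by
    intro t ht ht1
    have h1 := h _ (hK.add_smul_sub_mem hp hy ⟨ht.le, ht1⟩)
    have h2 : ‖u - p‖ ^ 2 ≤ ‖u - (p + t • (y - p))‖ ^ 2 := by gcongr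
    rw [← sub_sub, norm_sub_sq_real (u - p) (t • (y - p)), inner_smul_right, norm_smul, mul_pow,
      Real.norm_eq_abs, sq_abs] at h2
    linarith)
  linarith

lemma aux_nonexp {E : Type*} [NormedAddCommGroup E] [InnerProductSpace ℝ E]
    (u v p q : E) (h1 : ⟪u - p, q - p⟫ ≤ 0) (h2 : ⟪v - q, p - q⟫ ≤ 0) :
    ‖p - q‖ ≤ ‖u - v‖ := by
  have h3 : ‖p - q‖ ^ 2 ≤ ⟪u - v, p - q⟫ := by
    rw [← real_inner_self_eq_norm_sq]
    simp only [inner_sub_left, inner_sub_right] at *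
    linarith
  have h4 := real_inner_le_norm (u - v) (p - q)
  by_contra! h5
  nlinarith [norm_nonneg (u - v), norm_nonneg (p - q)]

/-- `k` projected gradient steps with the predicted parameter form an
approximate contraction with geometric rate, with error controlled by the parameter
prediction error. -/
theorem predicted_gradient_multi_step_approx_contraction
    {E : Type*} [NormedAddCommGroup E] [InnerProductSpace ℝ E] [CompleteSpace E]
    {m : ℕ} (Θ : Set (EuclideanSpace ℝ (Fin m)))
    (K : Set E) (hKne : K.Nonempty) (hKcl : IsClosed K) (hKconv : Convex ℝ K)
    (proj : E → E) (hprojMem : ∀ u, proj u ∈ K)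
    (hproj : ∀ u, ∀ y ∈ K, ‖u - proj u‖ ≤ ‖u - y‖)
    (f : E → EuclideanSpace ℝ (Fin m) → ℝ)
    (gradf : E → EuclideanSpace ℝ (Fin m) → E)
    (hgrad : ∀ x θ, HasGradientAt (fun y => f y θ) (gradf x θ) x)
    (L lam Cθ : ℝ) (hlam : 0 < lam)
    -- (A2) L-smooth in x
    (hA2 : ∀ θ ∈ Θ, ∀ x y : E,
      f y θ ≤ f x θ + ⟪gradf x θ, y - x⟫ + L / 2 * ‖y - x‖ ^ 2)
    -- (A3) λ-strongly convex in x
    (hA3 : ∀ θ ∈ Θ, ∀ x y : E,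
      f y θ ≥ f x θ + ⟪gradf x θ, y - x⟫ + lam / 2 * ‖y - x‖ ^ 2)
    -- (A4) Lipschitz x-gradients in θ
    (hA4 : ∀ x ∈ K, ∀ θ₁ ∈ Θ, ∀ θ₂ ∈ Θ,
      ‖gradf x θ₁ - gradf x θ₂‖ ≤ Cθ * ‖θ₁ - θ₂‖)
    (η : ℝ) (hη : 0 < η) (hηL : η ≤ 1 / L)
    (θ θhat : EuclideanSpace ℝ (Fin m)) (hθ : θ ∈ Θ) (hθhat : θhat ∈ Θ)
    (xstar : E) (hxstarMem : xstar ∈ K)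
    (hxstarMin : ∀ y ∈ K, f xstar θ ≤ f y θ)
    (x : E) (hx : x ∈ K)
    (z : ℕ → E) (hz0 : z 0 = x)
    (hzrec : ∀ j : ℕ, z (j + 1) = proj (z j - η • gradf (z j) θhat)) :
    ∀ k : ℕ, 1 ≤ k →
      ‖z k - xstar‖ ≤ contractionConst η lam ^ k * ‖x - xstar‖
          + η * Cθ * (1 - contractionConst η lam ^ k) / (1 - contractionConst η lam)
            * ‖θ - θhat‖
      ∧ ‖z k - xstar‖ ≤ contractionConst η lam ^ k * ‖x - xstar‖
          + η * Cθ / (1 - contractionConst η lam) * ‖θ - θhat‖ := by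
  set C := contractionConst η lam with hC
  have hpos : 0 < 1 + η * lam := by positivity
  have hC0 : 0 ≤ C := Real.sqrt_nonneg _
  have hC1 : C < 1 := by
    rw [hC, contractionConst, Real.sqrt_lt' one_pos]
    have : 0 < 2 * lam * η / (1 + η * lam) := by positivity
    linarith
  have hL : 0 < L := by
    by_contra! h
    have := one_div_nonpos.mpr h
    linarith
  have hLη : L * η ≤ 1 := by
    rw [le_div_iff₀ hL] at hηL
    linarith
  have hmin : ∀ w ∈ K, 0 ≤ ⟪gradf xstar θ, w - xstar⟫ := by
    intro w hw
    refine aux_scalar _ (L / 2 * ‖w - xstar‖ ^ 2) fun t ht ht1 => ?_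
    have h1 := hxstarMin _ (hKconv.add_smul_sub_mem hxstarMem hw ⟨ht.le, ht1⟩)
    have h2 := hA2 θ hθ xstar (xstar + t • (w - xstar))
    rw [add_sub_cancel_left, inner_smul_right, norm_smul, mul_pow,
      Real.norm_eq_abs, sq_abs] at h2
    linarith
  have hvar : ∀ u, ∀ y ∈ K, ⟪u - proj u, y - proj u⟫ ≤ 0 := fun u y hy =>
    aux_proj K hKconv u (proj u) y (hprojMem u) hy (hproj u)
  have hstep : ∀ y, ‖proj (y - η • gradf y θ) - xstar‖ ≤ C * ‖y - xstar‖ := by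
    intro y
    have hw := hvar (y - η • gradf y θ) xstar hxstarMem
    have hwK := hprojMem (y - η • gradf y θ)
    generalize proj (y - η • gradf y θ) = w at *
    have h1 := hA2 θ hθ y w
    have h2 := hA3 θ hθ y xstar
    have h3 := hA3 θ hθ xstar w
    have h4 := hmin w hwK
    have e1 : ⟪gradf y θ, w - y⟫ - ⟪gradf y θ, xstar - y⟫ = ⟪gradf y θ, w - xstar⟫ := by
      rw [← inner_sub_right]; congr 1; abel
    have e2 : η * ⟪gradf y θ, w - xstar⟫ ≤ ⟪y - w, w - xstar⟫ := by
      have : ⟪y - η • gradf y θ - w, xstar - w⟫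
          = η * ⟪gradf y θ, w - xstar⟫ - ⟪y - w, w - xstar⟫ := by
        simp only [inner_sub_left, inner_sub_right, real_inner_smul_left]
        ring
      linarith
    have e3 : ‖y - xstar‖ ^ 2 = ‖w - y‖ ^ 2 + 2 * ⟪y - w, w - xstar⟫ + ‖w - xstar‖ ^ 2 := by
      rw [norm_sub_rev w y, ← norm_add_sq_real]; congr 2; abel
    rw [norm_sub_rev xstar y] at h2
    have e4 : lam / 2 * ‖w - xstar‖ ^ 2 + lam / 2 * ‖y - xstar‖ ^ 2
        ≤ ⟪gradf y θ, w - xstar⟫ + L / 2 * ‖w - y‖ ^ 2 := by linarith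
    have e5 := mul_le_mul_of_nonneg_left e4 hη.le
    have e6 : L * η * ‖w - y‖ ^ 2 ≤ 1 * ‖w - y‖ ^ 2 := by gcongr
    have e7 : ‖w - xstar‖ ^ 2 ≤ (1 - 2 * lam * η / (1 + η * lam)) * ‖y - xstar‖ ^ 2 := by
      have : (1 - 2 * lam * η / (1 + η * lam)) * ‖y - xstar‖ ^ 2
          = ((1 - η * lam) * ‖y - xstar‖ ^ 2) / (1 + η * lam) := by
        field_simp
        ring
      rw [this, le_div_iff₀ hpos]
      linarith
    have e8 := Real.le_sqrt_of_sq_le e7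
    rwa [Real.sqrt_mul' _ (sq_nonneg _), Real.sqrt_sq (norm_nonneg _)] at e8
  have hzK : ∀ j, z j ∈ K := by
    intro j
    cases j with
    | zero => rw [hz0]; exact hx
    | succ j => rw [hzrec]; exact hprojMem _
  have hone : ∀ j, ‖z (j + 1) - xstar‖ ≤ C * ‖z j - xstar‖ + η * (Cθ * ‖θ - θhat‖) := by
    intro j
    rw [hzrec]
    have h1 := aux_nonexp _ _ _ _
      (hvar (z j - η • gradf (z j) θhat) _ (hprojMem (z j - η • gradf (z j) θ)))
      (hvar (z j - η • gradf (z j) θ) _ (hprojMem (z j - η • gradf (z j) θhat)))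
    rw [sub_sub_sub_cancel_left, ← smul_sub, norm_smul, Real.norm_of_nonneg hη.le] at h1
    have h2 := mul_le_mul_of_nonneg_left (hA4 (z j) (hzK j) θ hθ θhat hθhat) hη.le
    have h3 := hstep (z j)
    have h4 := norm_sub_le_norm_sub_add_norm_sub (proj (z j - η • gradf (z j) θhat))
      (proj (z j - η • gradf (z j) θ)) xstar
    linarith
  have hD : 0 ≤ η * (Cθ * ‖θ - θhat‖) :=
    mul_nonneg hη.le ((norm_nonneg _).trans (hA4 x hx θ hθ θhat hθhat))
  have h1C : 0 < 1 - C := by linarith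
  have hmain : ∀ k, ‖z k - xstar‖ ≤ C ^ k * ‖x - xstar‖
      + η * Cθ * (1 - C ^ k) / (1 - C) * ‖θ - θhat‖ := by
    intro k
    induction k with
    | zero => simp [hz0]
    | succ k ih =>
      have h1 := mul_le_mul_of_nonneg_left ih hC0
      have h2 := hone k
      have h3 : C ^ (k + 1) * ‖x - xstar‖
          + η * Cθ * (1 - C ^ (k + 1)) / (1 - C) * ‖θ - θhat‖
          = C * (C ^ k * ‖x - xstar‖ + η * Cθ * (1 - C ^ k) / (1 - C) * ‖θ - θhat‖)
            + η * (Cθ * ‖θ - θhat‖) := by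
        have := h1C.ne'
        field_simp
        ring
      linarith
  intro k _
  refine ⟨hmain k, (hmain k).trans ?_⟩
  have h1 : η * Cθ * (1 - C ^ k) / (1 - C) * ‖θ - θhat‖
      = η * Cθ / (1 - C) * ‖θ - θhat‖ - C ^ k * (η * (Cθ * ‖θ - θhat‖) / (1 - C)) := by
    ring
  have h2 : 0 ≤ C ^ k * (η * (Cθ * ‖θ - θhat‖) / (1 - C)) :=
    mul_nonneg (pow_nonneg hC0 k) (div_nonneg hD h1C.le)
  linarith
end

section
/- Let E be a real inner product space, K ⊆ E a convex set, and let g : E → ℝ be convex on K with a ≤ g(x) ≤ a + D for all x ∈ K (for some a ∈ ℝ and D ≥ 0). Let N ≥ 1, let x_1, …, x_N ∈ K, let p_1, …, p_N ≥ 0 with Σ_{i=1}^{N} p_i = 1, and let γ > 0. Then ln( Σ_{i=1}^{N} p_i · exp(−γ g(x_i)) ) ≤ −γ · g( Σ_{i=1}^{N} p_i x_i ) + γ² D² / 8. -/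
open Finset

open MeasureTheory ProbabilityTheory in
lemma hoeffding_finite_aux (N : ℕ) (p y : Fin N → ℝ) (hp : ∀ i, 0 ≤ p i) (hps : ∑ i, p i = 1)
    (a D : ℝ) (hy : ∀ i, a ≤ y i ∧ y i ≤ a + D) (t : ℝ) :
    ∑ i, p i * Real.exp (t * (y i - ∑ j, p j * y j)) ≤ Real.exp (t ^ 2 * D ^ 2 / 8) := by
  set μ : Measure (Fin N) := ∑ i, ENNReal.ofReal (p i) • Measure.dirac i with hμ
  have hprob : IsProbabilityMeasure μ := by
    constructor
    simp only [hμ, Measure.coe_finset_sum, Finset.sum_apply, Measure.smul_apply, measure_univ,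
      smul_eq_mul, mul_one]
    rw [← ENNReal.ofReal_sum_of_nonneg (fun i _ => hp i), hps, ENNReal.ofReal_one]
  have hint : ∀ f : Fin N → ℝ, ∫ i, f i ∂μ = ∑ i, p i * f i := by
    intro f
    rw [hμ, integral_finset_sum_measure]
    · refine Finset.sum_congr rfl fun i _ => ?_
      rw [integral_smul_measure, integral_dirac, ENNReal.toReal_ofReal (hp i), smul_eq_mul]
    · intro i _
      exact (integrable_dirac (by simp)).smul_measure ENNReal.ofReal_ne_top
  have h := (hasSubgaussianMGF_of_mem_Icc (μ := μ) (X := y) (a := a) (b := a + D)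
    (measurable_of_finite y).aemeasurable (Filter.Eventually.of_forall hy)).mgf_le t
  rw [mgf, hint, hint] at h
  refine h.trans (le_of_eq ?_)
  congr 1
  simp only [add_sub_cancel_left, NNReal.coe_pow, NNReal.coe_div, coe_nnnorm, NNReal.coe_ofNat,
    div_pow, Real.norm_eq_abs, sq_abs]
  ring

/-- Hoeffding's lemma combined with Jensen's inequality for the
exponentially weighted average step. -/
theorem log_exp_weighted_average_bound
    {E : Type*} [NormedAddCommGroup E] [InnerProductSpace ℝ E]
    (K : Set E) (hKconv : Convex ℝ K)
    (g : E → ℝ) (hg : ConvexOn ℝ K g)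
    (a D : ℝ) (hD : 0 ≤ D)
    (hbd : ∀ x ∈ K, a ≤ g x ∧ g x ≤ a + D)
    (N : ℕ) (hN : 1 ≤ N)
    (x : Fin N → E) (hx : ∀ i, x i ∈ K)
    (p : Fin N → ℝ) (hp : ∀ i, 0 ≤ p i) (hps : ∑ i, p i = 1)
    (γ : ℝ) (hγ : 0 < γ) :
    Real.log (∑ i, p i * Real.exp (-γ * g (x i))) ≤
      -γ * g (∑ i, p i • x i) + γ ^ 2 * D ^ 2 / 8 := by
  have h := hoeffding_finite_aux N p (fun i => g (x i)) hp hps a D (fun i => hbd _ (hx i)) (-γ)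
  have hJ : g (∑ i, p i • x i) ≤ ∑ i, p i * g (x i) := by
    simpa using hg.map_sum_le (t := Finset.univ) (fun i _ => hp i) hps (fun i _ => hx i)
  set m := ∑ i, p i * g (x i) with hm
  have hS : ∑ i, p i * Real.exp (-γ * g (x i)) =
      Real.exp (-γ * m) * ∑ i, p i * Real.exp (-γ * (g (x i) - m)) := by
    rw [Finset.mul_sum]
    refine Finset.sum_congr rfl fun i _ => ?_
    rw [mul_left_comm, ← Real.exp_add]
    congr 2
    ring
  have hpos : 0 < ∑ i, p i * Real.exp (-γ * g (x i)) := by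
    obtain ⟨i, _, hi⟩ := Finset.exists_ne_zero_of_sum_ne_zero (hps.trans_ne one_ne_zero)
    exact Finset.sum_pos' (fun j _ => mul_nonneg (hp j) (Real.exp_pos _).le)
      ⟨i, Finset.mem_univ i, mul_pos (lt_of_le_of_ne (hp i) hi.symm) (Real.exp_pos _)⟩
  rw [Real.log_le_iff_le_exp hpos, hS]
  calc _ ≤ Real.exp (-γ * m) * Real.exp ((-γ) ^ 2 * D ^ 2 / 8) := by gcongr
    _ = Real.exp (-γ * m + γ ^ 2 * D ^ 2 / 8) := by rw [← Real.exp_add, neg_sq]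
    _ ≤ _ := by
      apply Real.exp_le_exp.mpr
      nlinarith [mul_le_mul_of_nonneg_left hJ hγ.le]
end

section
/- Let E be a real inner product space, K ⊆ E a convex set, T ≥ 1, N ≥ 1, γ > 0, and let f_1, …, f_T : E → ℝ each be convex on K with values contained in an interval of length D ≥ 0 on K (i.e. for each t there is a_t with a_t ≤ f_t(x) ≤ a_t + D for all x ∈ K). Let x_t^i ∈ K for 1 ≤ t ≤ T, 1 ≤ i ≤ N be the experts' points. Define weights by p_{i,0} = 1/N and p_{i,t} = p_{i,t−1} exp(−γ f_t(x_t^i)) / Σ_{j=1}^{N} p_{j,t−1} exp(−γ f_t(x_t^j)), and played points x_t = Σ_{i=1}^{N} p_{i,t−1} x_t^i. Then Σ_{t=1}^{T} f_t(x_t) − min_{1 ≤ i ≤ N} Σ_{t=1}^{T} f_t(x_t^i) ≤ T γ D² / 8 + (1/γ) ln N. -/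
open Finset

lemma hoeffding_fin {N : ℕ} (q v : Fin N → ℝ) (hq : ∀ i, 0 < q i) (hs : ∑ i, q i = 1)
    (a D γ : ℝ) (hv : ∀ i, a ≤ v i ∧ v i ≤ a + D) :
    ∑ i, q i * Real.exp (-γ * v i) ≤ Real.exp (-γ * ∑ i, q i * v i + γ ^ 2 * D ^ 2 / 8) := by
  let P : PMF (Fin N) := PMF.ofFintype (fun i => ENNReal.ofReal (q i)) (by
    rw [← ENNReal.ofReal_sum_of_nonneg (fun i _ => (hq i).le), hs, ENNReal.ofReal_one])
  have hint : ∀ g : Fin N → ℝ, ∫ i, g i ∂P.toMeasure = ∑ i, q i * g i := by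
    intro g
    rw [PMF.integral_eq_sum]
    refine Finset.sum_congr rfl fun i _ => ?_
    simp [P, (hq i).le]
  have h := (ProbabilityTheory.hasSubgaussianMGF_of_mem_Icc (μ := P.toMeasure) (X := v)
    (a := a) (b := a + D) (measurable_of_finite v).aemeasurable
    (Filter.Eventually.of_forall fun i => ⟨(hv i).1, (hv i).2⟩)).mgf_le (-γ)
  rw [ProbabilityTheory.mgf, hint, hint] at h
  set m := ∑ i, q i * v i
  have e : ∑ i, q i * Real.exp (-γ * v i)
      = Real.exp (-γ * m) * ∑ i, q i * Real.exp (-γ * (v i - m)) := by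
    rw [Finset.mul_sum]
    refine Finset.sum_congr rfl fun i _ => ?_
    rw [mul_left_comm, ← Real.exp_add]
    congr 2
    ring
  rw [e, Real.exp_add]
  refine mul_le_mul_of_nonneg_left (h.trans (le_of_eq ?_)) (Real.exp_pos _).le
  congr 1
  simp only [NNReal.coe_pow, NNReal.coe_div, coe_nnnorm, add_sub_cancel_left, Real.norm_eq_abs,
    NNReal.coe_ofNat, div_pow, sq_abs]
  ring

/-- regret bound for the exponentially weighted average forecaster
applied to convex losses, with general learning rate `γ`. -/
theorem exp_weighted_forecaster_regret
    {E : Type*} [NormedAddCommGroup E] [InnerProductSpace ℝ E]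
    (K : Set E) (hKconv : Convex ℝ K)
    (T N : ℕ) (hT : 1 ≤ T) (hN : 1 ≤ N)
    (γ D : ℝ) (hγ : 0 < γ) (hD : 0 ≤ D)
    (f : ℕ → E → ℝ)
    (hconv : ∀ t ∈ Icc 1 T, ConvexOn ℝ K (f t))
    (hbd : ∀ t ∈ Icc 1 T, ∃ a : ℝ, ∀ x ∈ K, a ≤ f t x ∧ f t x ≤ a + D)
    (xE : ℕ → Fin N → E) (hxE : ∀ t ∈ Icc 1 T, ∀ i, xE t i ∈ K)
    (p : ℕ → Fin N → ℝ)
    (hp0 : ∀ i, p 0 i = 1 / (N : ℝ))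
    (hprec : ∀ t ∈ Icc 1 T, ∀ i, p t i =
      p (t - 1) i * Real.exp (-γ * f t (xE t i)) /
        ∑ j, p (t - 1) j * Real.exp (-γ * f t (xE t j)))
    (x : ℕ → E) (hx : ∀ t ∈ Icc 1 T, x t = ∑ i, p (t - 1) i • xE t i) :
    ∑ t ∈ Icc 1 T, f t (x t)
      - Finset.univ.inf' (Finset.univ_nonempty_iff.mpr ⟨⟨0, hN⟩⟩)
          (fun i => ∑ t ∈ Icc 1 T, f t (xE t i))
      ≤ T * γ * D ^ 2 / 8 + (1 / γ) * Real.log N := by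
  have hNpos : (0 : ℝ) < N := by exact_mod_cast hN
  haveI : Nonempty (Fin N) := ⟨⟨0, hN⟩⟩
  have key : ∀ t, t ≤ T → (∀ i, 0 < p t i) ∧ ∑ i, p t i = 1 ∧
      ∀ i, ∑ s ∈ Icc 1 t, f s (x s) - ∑ s ∈ Icc 1 t, f s (xE s i)
        ≤ t * γ * D ^ 2 / 8 + (1 / γ) * (Real.log (p t i) + Real.log N) := by
    intro t
    induction t with
    | zero =>
      intro _
      refine ⟨fun i => by rw [hp0]; positivity, ?_, fun i => ?_⟩
      · simp [hp0, hNpos.ne']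
      · simp [hp0]
    | succ t ih =>
      intro ht
      obtain ⟨hpos, hsum, hreg⟩ := ih (by omega)
      have hm : t + 1 ∈ Icc 1 T := by simp; omega
      have hpr := hprec _ hm
      have hxt := hx _ hm
      simp only [Nat.add_sub_cancel] at hpr hxt
      set Z := ∑ j, p t j * Real.exp (-γ * f (t + 1) (xE (t + 1) j)) with hZ
      have hZpos : 0 < Z :=
        Finset.sum_pos (fun j _ => mul_pos (hpos j) (Real.exp_pos _)) Finset.univ_nonempty
      obtain ⟨a, ha⟩ := hbd _ hm
      have hH := hoeffding_fin (p t) (fun i => f (t + 1) (xE (t + 1) i)) hpos hsum a D γ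
        (fun i => ha _ (hxE _ hm i))
      have hlog : Real.log Z ≤ -γ * ∑ i, p t i * f (t + 1) (xE (t + 1) i) + γ ^ 2 * D ^ 2 / 8 :=
        (Real.log_le_iff_le_exp hZpos).2 hH
      have hJ : f (t + 1) (x (t + 1)) ≤ ∑ i, p t i * f (t + 1) (xE (t + 1) i) := by
        rw [hxt]
        exact (hconv _ hm).map_sum_le (fun i _ => (hpos i).le) hsum (fun i _ => hxE _ hm i)
      refine ⟨fun i => ?_, ?_, fun i => ?_⟩
      · rw [hpr]
        exact div_pos (mul_pos (hpos i) (Real.exp_pos _)) hZpos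
      · simp only [hpr]
        rw [← Finset.sum_div, ← hZ, div_self hZpos.ne']
      · have hl : Real.log (p (t + 1) i)
            = Real.log (p t i) + -γ * f (t + 1) (xE (t + 1) i) - Real.log Z := by
          rw [hpr, Real.log_div (mul_pos (hpos i) (Real.exp_pos _)).ne' hZpos.ne',
            Real.log_mul (hpos i).ne' (Real.exp_pos _).ne', Real.log_exp]
        rw [Finset.sum_Icc_succ_top (by omega), Finset.sum_Icc_succ_top (by omega)]
        have h1 := hreg i
        have h2 : f (t + 1) (x (t + 1)) - f (t + 1) (xE (t + 1) i)
            ≤ γ * D ^ 2 / 8 + (1 / γ) * (Real.log (p (t + 1) i) - Real.log (p t i)) := by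
          have h3 := mul_le_mul_of_nonneg_left hJ hγ.le
          have h4 : γ * (f (t + 1) (x (t + 1)) - f (t + 1) (xE (t + 1) i) - γ * D ^ 2 / 8)
              ≤ Real.log (p (t + 1) i) - Real.log (p t i) := by
            rw [hl]; linarith
          have h5 := mul_le_mul_of_nonneg_left h4 (one_div_pos.2 hγ).le
          rw [← mul_assoc, one_div_mul_cancel hγ.ne', one_mul] at h5
          linarith
        push_cast
        linarith
  obtain ⟨hpos, hsum, hreg⟩ := key T le_rfl
  obtain ⟨i, -, hi⟩ := Finset.exists_mem_eq_inf' (Finset.univ_nonempty_iff.mpr ⟨⟨0, hN⟩⟩)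
    (fun i : Fin N => ∑ t ∈ Icc 1 T, f t (xE t i))
  rw [hi]
  refine (hreg i).trans ?_
  have h1 : p T i ≤ 1 := by
    rw [← hsum]
    exact Finset.single_le_sum (fun j _ => (hpos j).le) (Finset.mem_univ i)
  have h2 : Real.log (p T i) ≤ 0 := Real.log_nonpos (hpos i).le h1
  have h3 := mul_le_mul_of_nonneg_left h2 (one_div_pos.2 hγ).le
  linarith
end

section
/- Let E be a real inner product space, K ⊆ E a convex set, T ≥ 1, N ≥ 1, D > 0, and let f_1, …, f_T : E → ℝ each be convex on K with values contained in an interval of length D on K. Let x_t^i ∈ K for 1 ≤ t ≤ T, 1 ≤ i ≤ N, set γ = √(8/(T D²)), define weights by p_{i,0} = 1/N and p_{i,t} = p_{i,t−1} exp(−γ f_t(x_t^i)) / Σ_{j=1}^{N} p_{j,t−1} exp(−γ f_t(x_t^j)), and played points x_t = Σ_{i=1}^{N} p_{i,t−1} x_t^i. Then Σ_{t=1}^{T} f_t(x_t) − min_{1 ≤ i ≤ N} Σ_{t=1}^{T} f_t(x_t^i) ≤ (D √(2T) / 4)(1 + ln N). -/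
open Finset

open MeasureTheory ProbabilityTheory in
lemma finite_hoeffding {N : ℕ} (p z : Fin N → ℝ) (hp : ∀ i, 0 ≤ p i) (hs : ∑ i, p i = 1)
    (a D γ : ℝ) (hD : 0 < D) (hz : ∀ i, a ≤ z i ∧ z i ≤ a + D) :
    ∑ i, p i * Real.exp (-γ * z i) ≤
      Real.exp (-γ * ∑ i, p i * z i + γ ^ 2 * D ^ 2 / 8) := by
  let μ : Measure (Fin N) := ∑ i, ENNReal.ofReal (p i) • Measure.dirac i
  have hμ : IsProbabilityMeasure μ := by
    constructor
    simp only [μ, Measure.coe_finsetSum, Finset.sum_apply, Measure.smul_apply, measure_univ,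
      smul_eq_mul, mul_one]
    rw [← ENNReal.ofReal_sum_of_nonneg (fun i _ => hp i), hs, ENNReal.ofReal_one]
  have hint : ∀ g : Fin N → ℝ, ∫ i, g i ∂μ = ∑ i, p i * g i := by
    intro g
    simp only [μ]
    rw [integral_finsetSum_measure]
    · refine Finset.sum_congr rfl fun i _ => ?_
      rw [integral_smul_measure, integral_dirac, ENNReal.toReal_ofReal (hp i), smul_eq_mul]
    · intro i _
      exact Integrable.smul_measure (Integrable.of_finite) ENNReal.ofReal_ne_top
  have h := (hasSubgaussianMGF_of_mem_Icc (μ := μ) (X := z) (a := a) (b := a + D)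
    (measurable_of_finite z).aemeasurable (Filter.Eventually.of_forall fun i => hz i)).mgf_le (-γ)
  rw [mgf, hint, hint] at h
  have e : ∑ i, p i * Real.exp (-γ * z i) = Real.exp (-γ * ∑ i, p i * z i) *
      ∑ i, p i * Real.exp (-γ * (z i - ∑ i, p i * z i)) := by
    rw [Finset.mul_sum]
    refine Finset.sum_congr rfl fun i _ => ?_
    rw [mul_left_comm, ← Real.exp_add]
    congr 2
    ring
  rw [e, Real.exp_add]
  refine mul_le_mul_of_nonneg_left (h.trans (le_of_eq ?_)) (Real.exp_pos _).le
  congr 1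
  simp [abs_of_pos hD]
  ring

/-- regret bound for the exponentially weighted average forecaster
applied to convex losses, with the optimized learning rate `γ = √(8/(T D²))`. -/
theorem exp_weighted_forecaster_regret_optimized
    {E : Type*} [NormedAddCommGroup E] [InnerProductSpace ℝ E]
    (K : Set E) (hKconv : Convex ℝ K)
    (T N : ℕ) (hT : 1 ≤ T) (hN : 1 ≤ N)
    (γ D : ℝ) (hD : 0 < D) (hγ : γ = Real.sqrt (8 / (T * D ^ 2)))
    (f : ℕ → E → ℝ)
    (hconv : ∀ t ∈ Icc 1 T, ConvexOn ℝ K (f t))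
    (hbd : ∀ t ∈ Icc 1 T, ∃ a : ℝ, ∀ x ∈ K, a ≤ f t x ∧ f t x ≤ a + D)
    (xE : ℕ → Fin N → E) (hxE : ∀ t ∈ Icc 1 T, ∀ i, xE t i ∈ K)
    (p : ℕ → Fin N → ℝ)
    (hp0 : ∀ i, p 0 i = 1 / (N : ℝ))
    (hprec : ∀ t ∈ Icc 1 T, ∀ i, p t i =
      p (t - 1) i * Real.exp (-γ * f t (xE t i)) /
        ∑ j, p (t - 1) j * Real.exp (-γ * f t (xE t j)))
    (x : ℕ → E) (hx : ∀ t ∈ Icc 1 T, x t = ∑ i, p (t - 1) i • xE t i) :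
    ∑ t ∈ Icc 1 T, f t (x t)
      - Finset.univ.inf' (Finset.univ_nonempty_iff.mpr ⟨⟨0, hN⟩⟩)
          (fun i => ∑ t ∈ Icc 1 T, f t (xE t i))
      ≤ D * Real.sqrt (2 * T) / 4 * (1 + Real.log N) := by
  have hN0 : (0 : ℝ) < N := by exact_mod_cast hN
  have hT0 : (0 : ℝ) < T := by exact_mod_cast hT
  haveI : Nonempty (Fin N) := ⟨⟨0, hN⟩⟩
  have hγ0 : 0 < γ := by rw [hγ]; positivity
  have key : ∀ t : ℕ, t ≤ T → (∀ i, 0 < p t i) ∧ ∑ i, p t i = 1 ∧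
      ∀ i, γ * (∑ s ∈ Icc 1 t, f s (x s) - ∑ s ∈ Icc 1 t, f s (xE s i)) ≤
        Real.log (p t i) + Real.log N + t * (γ ^ 2 * D ^ 2 / 8) := by
    intro t
    induction t with
    | zero =>
      intro _
      refine ⟨fun i => by rw [hp0]; positivity, ?_, fun i => ?_⟩
      · simp [hp0, hN0.ne']
      · simp [hp0]
    | succ t ih =>
      intro ht
      obtain ⟨h1, h2, h3⟩ := ih (by omega)
      have hm : t + 1 ∈ Icc 1 T := by simp; omega
      have hr := hprec _ hm
      have hxx := hx _ hm
      simp only [Nat.add_sub_cancel] at hr hxx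
      obtain ⟨a, ha⟩ := hbd _ hm
      have hH := finite_hoeffding (p t) (fun i => f (t + 1) (xE (t + 1) i))
        (fun i => (h1 i).le) h2 a D γ hD (fun i => ha _ (hxE _ hm i))
      have hJ : f (t + 1) (x (t + 1)) ≤ ∑ i, p t i * f (t + 1) (xE (t + 1) i) := by
        rw [hxx]
        exact (hconv _ hm).map_sum_le (fun i _ => (h1 i).le) h2 (fun i _ => hxE _ hm i)
      set Z := ∑ j, p t j * Real.exp (-γ * f (t + 1) (xE (t + 1) j)) with hZ
      have hZ0 : 0 < Z :=
        Finset.sum_pos (fun i _ => mul_pos (h1 i) (Real.exp_pos _)) Finset.univ_nonempty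
      refine ⟨fun i => ?_, ?_, fun i => ?_⟩
      · rw [hr]
        exact div_pos (mul_pos (h1 i) (Real.exp_pos _)) hZ0
      · simp only [hr]
        rw [← Finset.sum_div, ← hZ, div_self hZ0.ne']
      · rw [Finset.sum_Icc_succ_top (by omega), Finset.sum_Icc_succ_top (by omega), hr,
          Real.log_div (mul_pos (h1 i) (Real.exp_pos _)).ne' hZ0.ne',
          Real.log_mul (h1 i).ne' (Real.exp_pos _).ne', Real.log_exp]
        have hl := (Real.log_le_iff_le_exp hZ0).2 hH
        have := h3 i
        have := mul_le_mul_of_nonneg_left hJ hγ0.le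
        push_cast
        linarith
  obtain ⟨h1, h2, h3⟩ := key T le_rfl
  obtain ⟨i, -, hi⟩ := Finset.exists_mem_eq_inf' (Finset.univ_nonempty_iff.mpr ⟨⟨0, hN⟩⟩)
    (fun i : Fin N => ∑ t ∈ Icc 1 T, f t (xE t i))
  rw [hi]
  have hle : p T i ≤ 1 := by
    rw [← h2]
    exact Finset.single_le_sum (fun j _ => (h1 j).le) (Finset.mem_univ i)
  have hlog := Real.log_nonpos (h1 i).le hle
  have hk := h3 i
  have hsq : γ ^ 2 * (T * D ^ 2) = 8 := by
    rw [hγ, Real.sq_sqrt (by positivity)]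
    field_simp
  have hgc : γ * (D * Real.sqrt (2 * T) / 4) = 1 := by
    have hs : Real.sqrt (2 * T) ^ 2 = 2 * T := Real.sq_sqrt (by positivity)
    have hn : 0 ≤ γ * (D * Real.sqrt (2 * T) / 4) := by positivity
    have : (γ * (D * Real.sqrt (2 * T) / 4)) ^ 2 = 1 := by
      rw [mul_pow, div_pow, mul_pow, hs]
      linarith
    nlinarith
  refine le_of_mul_le_mul_left ?_ hγ0
  rw [← mul_assoc, hgc]
  linarith
end
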